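/- In the quiver Q with vertices A, B, C, D and arrows a₁, a₂ : D → A, b₁ : A → B, b₂ : A → C, a₃ : C → B, c₁ : B → D, c₂ : C → D, every path of length at least 1 that contains none of the six two-step paths a₁b₁, b₁c₁, c₁a₁, a₂b₂, b₂c₂, c₂a₂ as a consecutive subpath is a consecutive subpath of the length-seven path c₂a₁b₂a₃c₁a₂b₁. In particular there is no such path of length ≥ 8, and the set of paths in Q avoiding these six two-step paths is finite. -/

import Mathlib

/-!
# Statement 2

Let `Q` be the quiver with vertices `A, B, C, D` and arrows `a₁, a₂ : D → A`, `b₁ : A → B`,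
`b₂ : A → C`, `a₃ : C → B`, `c₁ : B → D`, `c₂ : C → D`.  A path of length `r ≥ 1` is a
sequence of arrows `ℓ₁⋯ℓ_r` with the target of `ℓ_k` equal to the source of `ℓ_{k+1}`
(paths written left to right).  Every path of length at least `1` that contains none of the
six two-step paths `a₁b₁, b₁c₁, c₁a₁, a₂b₂, b₂c₂, c₂a₂` as a consecutive subpath is a
consecutive subpath (infix) of the length-seven path `c₂a₁b₂a₃c₁a₂b₁`.  In particular there
is no such path of length `≥ 8`, and the set of paths in `Q` avoiding these six two-step
paths is finite.
-/

/-- The vertices `A, B, C, D` of the quiver. -/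
inductive QVertex | A | B | C | D
deriving DecidableEq

/-- The arrows `a₁, a₂ : D → A`, `b₁ : A → B`, `b₂ : A → C`, `a₃ : C → B`, `c₁ : B → D`,
`c₂ : C → D` of the quiver. -/
inductive QArrow | a1 | a2 | b1 | b2 | a3 | c1 | c2
deriving DecidableEq

namespace QArrow

/-- Source vertex of an arrow. -/
def src : QArrow → QVertex
  | a1 => .D | a2 => .D | b1 => .A | b2 => .A | a3 => .C | c1 => .B | c2 => .C

/-- Target vertex of an arrow. -/
def tgt : QArrow → QVertex
  | a1 => .A | a2 => .A | b1 => .B | b2 => .C | a3 => .B | c1 => .D | c2 => .D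

end QArrow

/-- A path of length `≥ 1`: a nonempty list of arrows, consecutively composable
(written left to right, so `a₁b₁` means `a₁` followed by `b₁`). -/
def IsPath (p : List QArrow) : Prop :=
  p ≠ [] ∧ p.Chain' (fun x y => x.tgt = y.src)

/-- The six forbidden two-step paths `a₁b₁, b₁c₁, c₁a₁, a₂b₂, b₂c₂, c₂a₂`
(the cyclic derivatives of the potential `W = a₁b₁c₁ + a₂b₂c₂`). -/
def badPairs : List (QArrow × QArrow) :=
  [(.a1, .b1), (.b1, .c1), (.c1, .a1), (.a2, .b2), (.b2, .c2), (.c2, .a2)]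

/-- `p` contains none of the six two-step paths as a consecutive subpath. -/
def Avoids (p : List QArrow) : Prop :=
  p.Chain' (fun x y => (x, y) ∉ badPairs)

/-- The length-seven path `c₂a₁b₂a₃c₁a₂b₁`. -/
def w7 : List QArrow := [.c2, .a1, .b2, .a3, .c1, .a2, .b1]

/-- The suffix of `w7` starting at a given arrow. -/
def w7From (x : QArrow) : List QArrow := w7.dropWhile (fun y => decide (y ≠ x))

theorem w7From_suffix (x : QArrow) : w7From x <:+ w7 := List.dropWhile_suffix _

theorem w7From_step (x y : QArrow) (h1 : x.tgt = y.src) (h2 : (x, y) ∉ badPairs) :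
    w7From x = x :: w7From y := by
  revert h1 h2
  cases x <;> cases y <;> decide

theorem w7From_head (x : QArrow) : [x] <+: w7From x := by
  cases x <;> decide

theorem prefix_w7From (p : List QArrow) : ∀ x : QArrow,
    List.IsChain (fun x y : QArrow => x.tgt = y.src) (x :: p) →
    List.IsChain (fun x y : QArrow => (x, y) ∉ badPairs) (x :: p) → (x :: p) <+: w7From x := by
  induction p with
  | nil => intro x _ _; exact w7From_head x
  | cons y p ih =>
    intro x h1 h2
    rw [List.isChain_cons_cons] at h1 h2
    rw [w7From_step x y h1.1 h2.1]
    exact (List.prefix_cons_inj x).2 (ih y h1.2 h2.2)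

theorem infix_w7 (p : List QArrow) (h : IsPath p) (h' : Avoids p) : p <:+: w7 := by
  cases p with
  | nil => exact absurd rfl h.1
  | cons x p => exact (prefix_w7From p x h.2 h').isInfix.trans (w7From_suffix x).isInfix

/-- Every path of length at least `1` in `Q` avoiding the six two-step
paths `a₁b₁, b₁c₁, c₁a₁, a₂b₂, b₂c₂, c₂a₂` is a consecutive subpath (infix) of the
length-seven path `c₂a₁b₂a₃c₁a₂b₁`; in particular no such path has length `≥ 8`, and the
set of such paths is finite. -/
theorem avoiding_paths_are_infixes_of_w7 :
    (∀ p : List QArrow, IsPath p → Avoids p → p <:+: w7) ∧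
    (∀ p : List QArrow, IsPath p → Avoids p → ¬ 8 ≤ p.length) ∧
    {p : List QArrow | IsPath p ∧ Avoids p}.Finite := by
  refine ⟨infix_w7, fun p h h' h8 => ?_, ?_⟩
  · have := (infix_w7 p h h').length_le
    simp only [w7, List.length_cons, List.length_nil] at this
    omega
  · refine (w7.sublists.toFinset.finite_toSet).subset ?_
    rintro p ⟨h, h'⟩
    simpa using (infix_w7 p h h').sublist
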